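/- Let N ≥ 1, ℓ ≥ 2 and T ≥ 1 be integers, let y ∈ ZMod N, let K ≥ 1 be a real number, and set k = ⌈K^(1/ℓ)⌉. For a uniformly random function H : Fin T → ZMod N, the probability that there are at least K ℓ-element finsets I ⊆ Fin T with ∑_{i ∈ I} H i = y is at most the probability that there exists s ∈ ZMod N such that at least K^((ℓ−1)/ℓ) (ℓ−1)-element finsets J ⊆ Fin T satisfy ∑_{j ∈ J} H j = s, plus (choose T k) · ((T^(ℓ−1) : ℝ)/N)^k. -/

import Mathlib

/-!
Call an index `t` *effective* for `H` if it is the largest element of some `ℓ`-element set of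
sum `y`. Sorting the `ℓ`-sets of sum `y` by their largest element `t`, those with maximum `t`
inject (by erasing `t`) into the `(ℓ-1)`-sets of sum `y - H t`. So if there are at least `K`
such `ℓ`-sets while every `s` has fewer than `K^((ℓ-1)/ℓ)` sets of size `ℓ-1` and sum `s`, then
more than `K^(1/ℓ)` indices are effective (`lt_card_effective`).

A fixed set `S` of indices is entirely effective with probability at most `(T^(ℓ-1)/N)^|S|`
(`card_all_effective_le`): once a witnessing `(ℓ-1)`-set has been chosen for each `t ∈ S`, the
values of `H` on `S` are determined, in increasing order of the index, by those off `S`.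
A union bound over the `k`-element sets `S` concludes.
-/

open Finset
open scoped Classical

/-- Probability of an event under the uniform distribution on a finite type. -/
noncomputable def uniformPr {α : Type*} [Fintype α] (p : α → Prop) : ℝ :=
  ((Finset.univ.filter p).card : ℝ) / (Fintype.card α : ℝ)

/-- The index `t` is the largest element of an `ℓ`-element set of sum `y` under `H`; the set is
encoded by its other `ℓ - 1` elements, all below `t`. -/
def Effective {N T : ℕ} (ℓ : ℕ) (y : ZMod N) (H : Fin T → ZMod N) (t : Fin T) : Prop :=
  ∃ J : Finset (Fin T), J.card = ℓ - 1 ∧ (∀ j ∈ J, j < t) ∧ (∑ j ∈ J, H j) + H t = y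

/-- Values of `H` at the indices in `S` are determined by the earlier ones through the witnesses
`f t`, so `H` is determined by its restriction to the complement of `S`. -/
lemma eq_of_eq_off {N T : ℕ} {y : ZMod N} {S : Finset (Fin T)}
    (f : Fin T → Finset (Fin T)) (hf : ∀ t ∈ S, ∀ j ∈ f t, j < t)
    {H H' : Fin T → ZMod N}
    (h : ∀ t ∈ S, (∑ j ∈ f t, H j) + H t = y) (h' : ∀ t ∈ S, (∑ j ∈ f t, H' j) + H' t = y)
    (hoff : ∀ t ∉ S, H t = H' t) : H = H' := by
  funext t
  induction t using WellFoundedLT.induction with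
  | ind t ih =>
    by_cases ht : t ∈ S
    · have h1 := h t ht
      rw [← h' t ht, Finset.sum_congr rfl (fun j hj => ih j (hf t ht j hj))] at h1
      exact add_left_cancel h1
    · exact hoff t ht

lemma card_all_effective_le {N T : ℕ} [NeZero N] (ℓ : ℕ) (y : ZMod N) (S : Finset (Fin T)) :
    (Finset.univ.filter (fun H : Fin T → ZMod N => ∀ t ∈ S, Effective ℓ y H t)).card
      ≤ N ^ (T - S.card) * (T ^ (ℓ - 1)) ^ S.card := by
  -- A function `H` with witnesses on `S` is encoded by its values off `S` and these witnesses.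
  have hw : ∀ H : Fin T → ZMod N, ∃ g : Fin T → Finset (Fin T),
      (∀ t ∈ S, Effective ℓ y H t) → ∀ t ∈ S, (g t).card = ℓ - 1 ∧ (∀ j ∈ g t, j < t) ∧
        (∑ j ∈ g t, H j) + H t = y := by
    intro H
    by_cases hH : ∀ t ∈ S, Effective ℓ y H t
    · choose! g hg using hH
      exact ⟨g, fun _ => hg⟩
    · exact ⟨fun _ => ∅, fun h => absurd h hH⟩
  choose g hg using hw
  let code : (Fin T → ZMod N) → ({t // t ∉ S} → ZMod N) × ({t // t ∈ S} → Finset (Fin T)) :=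
    fun H => (fun t => H t, fun t => g H t)
  let target : Finset (({t // t ∉ S} → ZMod N) × ({t // t ∈ S} → Finset (Fin T))) :=
    Finset.univ ×ˢ Fintype.piFinset (fun _ => Finset.univ.powersetCard (ℓ - 1))
  have hcard : target.card = N ^ (T - S.card) * (T.choose (ℓ - 1)) ^ S.card := by
    simp [target, Finset.card_product, Fintype.card_subtype_compl]
  calc _ ≤ target.card := by
        refine Finset.card_le_card_of_injOn code ?_ ?_
        · intro H hH
          have hH' : ∀ t ∈ S, Effective ℓ y H t := by simpa using hH
          simp only [target, code, Finset.coe_product, Set.mem_prod, Finset.mem_coe,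
            Finset.mem_univ, true_and, Fintype.mem_piFinset, Finset.mem_powersetCard,
            Finset.subset_univ]
          exact fun t => (hg H hH' t t.2).1
        · intro H hH H' hH' heq
          have h1 : ∀ t ∈ S, Effective ℓ y H t := by simpa using hH
          have h2 : ∀ t ∈ S, Effective ℓ y H' t := by simpa using hH'
          have hoff := congrArg Prod.fst heq
          have hon := congrArg Prod.snd heq
          refine eq_of_eq_off (y := y) (S := S) (g H) (fun t ht => (hg H h1 t ht).2.1)
            (fun t ht => (hg H h1 t ht).2.2) ?_ (fun t ht => congrFun hoff ⟨t, ht⟩)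
          intro t ht
          have hgt : g H t = g H' t := congrFun hon ⟨t, ht⟩
          rw [hgt]
          exact (hg H' h2 t ht).2.2
    _ = N ^ (T - S.card) * (T.choose (ℓ - 1)) ^ S.card := hcard
    _ ≤ _ := by gcongr; exact Nat.choose_le_pow _ _

/-- Union bound over the `k`-sets of indices that are entirely effective. -/
lemma card_many_effective_le {N T : ℕ} [NeZero N] (ℓ k : ℕ) (y : ZMod N) :
    (Finset.univ.filter (fun H : Fin T → ZMod N =>
        k ≤ (Finset.univ.filter (fun t => Effective ℓ y H t)).card)).card
      ≤ T.choose k * (N ^ (T - k) * (T ^ (ℓ - 1)) ^ k) := by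
  calc _ ≤ ((Finset.univ.powersetCard k).biUnion (fun S : Finset (Fin T) =>
          Finset.univ.filter (fun H : Fin T → ZMod N => ∀ t ∈ S, Effective ℓ y H t))).card := by
        refine Finset.card_le_card fun H hH => ?_
        obtain ⟨S, hS, hSc⟩ := Finset.exists_subset_card_eq (Finset.mem_filter.1 hH).2
        simp only [Finset.mem_biUnion, Finset.mem_powersetCard, Finset.mem_filter,
          Finset.mem_univ, true_and]
        exact ⟨S, ⟨Finset.subset_univ _, hSc⟩, fun t ht => (Finset.mem_filter.1 (hS ht)).2⟩
    _ ≤ (Finset.univ.powersetCard k : Finset (Finset (Fin T))).card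
          * (N ^ (T - k) * (T ^ (ℓ - 1)) ^ k) := by
        refine Finset.card_biUnion_le_card_mul _ _ _ fun S hS => ?_
        have := card_all_effective_le ℓ y S
        rwa [(Finset.mem_powersetCard.1 hS).2] at this
    _ = _ := by simp

/-- Grouping `ℓ`-sets of sum `y` by their maximum: if every group of `(ℓ-1)`-sets of equal sum
has fewer than `B` members, then `B` times the number of effective indices strictly exceeds any
positive lower bound `K` on the number of `ℓ`-sets of sum `y`. -/
lemma lt_card_effective {N T ℓ : ℕ} (hℓ : 2 ≤ ℓ) (y : ZMod N)
    (H : Fin T → ZMod N) (K B : ℝ) (hK : 0 < K)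
    (hy : K ≤ ((Finset.univ.filter
      (fun I : Finset (Fin T) => I.card = ℓ ∧ (∑ i ∈ I, H i) = y)).card : ℝ))
    (hB : ∀ s : ZMod N, ((Finset.univ.filter
      (fun J : Finset (Fin T) => J.card = ℓ - 1 ∧ (∑ j ∈ J, H j) = s)).card : ℝ) < B) :
    K < ((Finset.univ.filter (fun t => Effective ℓ y H t)).card : ℝ) * B := by
  set A := Finset.univ.filter
    (fun I : Finset (Fin T) => I.card = ℓ ∧ (∑ i ∈ I, H i) = y) with hA
  set E := Finset.univ.filter (fun t => Effective ℓ y H t) with hE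
  let D : Fin T → Finset (Finset (Fin T)) := fun t => Finset.univ.filter
    (fun J : Finset (Fin T) => J.card = ℓ - 1 ∧ (∑ j ∈ J, H j) = y - H t)
  have hsub : A ⊆ E.biUnion (fun t => (D t).image (fun J => insert t J)) := by
    intro I hI
    obtain ⟨hIc, hIs⟩ := (Finset.mem_filter.1 hI).2
    have hne : I.Nonempty := Finset.card_pos.1 (by omega)
    have hm := I.max'_mem hne
    have hc : (I.erase (I.max' hne)).card = ℓ - 1 := by rw [Finset.card_erase_of_mem hm, hIc]
    have hs : (∑ j ∈ I.erase (I.max' hne), H j) + H (I.max' hne) = y := by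
      rw [Finset.sum_erase_add _ _ hm, hIs]
    simp only [Finset.mem_biUnion, Finset.mem_image, D, E, Finset.mem_filter, Finset.mem_univ,
      true_and]
    exact ⟨I.max' hne, ⟨_, hc, fun j hj => I.lt_max'_of_mem_erase_max' hne hj, hs⟩,
      I.erase (I.max' hne), ⟨hc, eq_sub_of_add_eq hs⟩, Finset.insert_erase hm⟩
  have hle : A.card ≤ ∑ t ∈ E, (D t).card :=
    (Finset.card_le_card hsub).trans (Finset.card_biUnion_le.trans
      (Finset.sum_le_sum fun t _ => Finset.card_image_le))
  have hle' : (A.card : ℝ) ≤ ∑ t ∈ E, ((D t).card : ℝ) := by exact_mod_cast hle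
  have hEne : E.Nonempty := by
    rw [Finset.nonempty_iff_ne_empty]
    intro h0
    rw [h0, Finset.sum_empty] at hle'
    linarith
  calc K ≤ ∑ t ∈ E, ((D t).card : ℝ) := hy.trans hle'
    _ < ∑ _t ∈ E, B := Finset.sum_lt_sum_of_nonempty hEne fun t _ => hB (y - H t)
    _ = _ := by simp

/-- Probabilistic induction step: for a uniformly random `H : Fin T → ZMod N`, with
`k = ⌈K^(1/ℓ)⌉`, the probability of having at least `K` many `ℓ`-element finsets of sum
`y` is at most the probability that some value `s` has at least `K^((ℓ-1)/ℓ)` many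
`(ℓ-1)`-element finsets of sum `s`, plus `choose T k · (T^(ℓ-1)/N)^k`. -/
theorem tuples_induction_step (N ℓ T : ℕ) [NeZero N] (hN : 1 ≤ N) (hℓ : 2 ≤ ℓ)
    (hT : 1 ≤ T) (y : ZMod N) (K : ℝ) (hK : 1 ≤ K) :
    uniformPr (fun H : Fin T → ZMod N =>
        K ≤ ((Finset.univ.filter
          (fun I : Finset (Fin T) => I.card = ℓ ∧ (∑ i ∈ I, H i) = y)).card : ℝ))
      ≤ uniformPr (fun H : Fin T → ZMod N =>
          ∃ s : ZMod N, K ^ (((ℓ : ℝ) - 1) / (ℓ : ℝ)) ≤ ((Finset.univ.filter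
            (fun J : Finset (Fin T) => J.card = ℓ - 1 ∧ (∑ j ∈ J, H j) = s)).card : ℝ))
        + (T.choose ⌈K ^ ((1 : ℝ) / (ℓ : ℝ))⌉₊ : ℝ)
            * ((T : ℝ) ^ (ℓ - 1) / (N : ℝ)) ^ ⌈K ^ ((1 : ℝ) / (ℓ : ℝ))⌉₊ := by
  set k := ⌈K ^ ((1 : ℝ) / (ℓ : ℝ))⌉₊ with hk
  set B := K ^ (((ℓ : ℝ) - 1) / (ℓ : ℝ)) with hB
  have hK0 : 0 < K := by linarith
  have hBpos : 0 < B := Real.rpow_pos_of_pos hK0 _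
  have hℓ0 : (ℓ : ℝ) ≠ 0 := by positivity
  have hKB : K ^ ((1 : ℝ) / (ℓ : ℝ)) * B = K := by
    rw [hB, ← Real.rpow_add hK0, ← add_div, add_sub_cancel, div_self hℓ0, Real.rpow_one]
  have hN0 : (0 : ℝ) < N := by exact_mod_cast hN
  unfold uniformPr
  set P := Finset.univ.filter (fun H : Fin T → ZMod N =>
    K ≤ ((Finset.univ.filter
      (fun I : Finset (Fin T) => I.card = ℓ ∧ (∑ i ∈ I, H i) = y)).card : ℝ)) with hP
  set Q := Finset.univ.filter (fun H : Fin T → ZMod N =>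
    ∃ s : ZMod N, B ≤ ((Finset.univ.filter
      (fun J : Finset (Fin T) => J.card = ℓ - 1 ∧ (∑ j ∈ J, H j) = s)).card : ℝ)) with hQ
  set R := Finset.univ.filter (fun H : Fin T → ZMod N =>
    k ≤ (Finset.univ.filter (fun t => Effective ℓ y H t)).card) with hR
  have hsub : P ⊆ Q ∪ R := by
    intro H hH
    rw [Finset.mem_union]
    by_cases hq : H ∈ Q
    · exact Or.inl hq
    · refine Or.inr (Finset.mem_filter.2 ⟨Finset.mem_univ _, ?_⟩)
      have hq' : ∀ s : ZMod N, ((Finset.univ.filter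
          (fun J : Finset (Fin T) => J.card = ℓ - 1 ∧ (∑ j ∈ J, H j) = s)).card : ℝ) < B := by
        intro s
        by_contra hs
        exact hq (Finset.mem_filter.2 ⟨Finset.mem_univ _, s, not_lt.1 hs⟩)
      have h := lt_card_effective hℓ y H K B hK0 (Finset.mem_filter.1 hH).2 hq'
      refine Nat.ceil_le.2 (le_of_lt (lt_of_mul_lt_mul_right ?_ hBpos.le))
      rwa [hKB]
  have hcard : (P.card : ℝ) ≤ Q.card + R.card := by
    exact_mod_cast (Finset.card_le_card hsub).trans (Finset.card_union_le _ _)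
  have hRc : (R.card : ℝ) ≤ T.choose k * ((N : ℝ) ^ (T - k) * ((T : ℝ) ^ (ℓ - 1)) ^ k) := by
    exact_mod_cast card_many_effective_le ℓ k y
  have htot : (Fintype.card (Fin T → ZMod N) : ℝ) = (N : ℝ) ^ T := by
    simp [ZMod.card]
  have hRp : (R.card : ℝ) / (N : ℝ) ^ T
      ≤ (T.choose k : ℝ) * ((T : ℝ) ^ (ℓ - 1) / (N : ℝ)) ^ k := by
    rw [div_le_iff₀ (by positivity)]
    refine hRc.trans (le_of_eq ?_)
    rcases le_or_gt k T with hkT | hkT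
    · have hpow : (N : ℝ) ^ T = N ^ (T - k) * N ^ k := by rw [← pow_add, Nat.sub_add_cancel hkT]
      rw [hpow, div_pow]
      field_simp
    · simp [Nat.choose_eq_zero_of_lt hkT]
  rw [htot]
  calc (P.card : ℝ) / (N : ℝ) ^ T ≤ (Q.card + R.card) / (N : ℝ) ^ T := by gcongr
    _ = Q.card / (N : ℝ) ^ T + R.card / (N : ℝ) ^ T := add_div _ _ _
    _ ≤ _ := by
        gcongr
        -- The two filters differ only in their decidability instances.
        intro H hH
        simpa [Q] using hH
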